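/- (Admissibility of the min-max MHPP heuristic.) Let G be a connected finite simple graph with unit edge costs, let there be N agents with start vertices o_1,…,o_N, a goal set V_d of vertices, M target vertices t_1,…,t_M, and eligibility sets f_A(v) ⊆ {1,…,N} for each vertex v. Suppose for each agent i there is a walk w_i in G from o_i to δ(i), where δ is an injective goal assignment with δ(i) ∈ V_d and i ∈ f_A(δ(i)), and suppose every target is covered: for each m there exists an agent i ∈ f_A(t_m) with t_m on the walk w_i. Then the makespan max_{i} length(w_i) is at least the optimal min-max multi-agent Hamiltonian path value: the minimum, over all target assignments ψ : {1,…,M} → {1,…,N} with ψ(m) ∈ f_A(t_m), all injective goal assignments δ' with δ'(i) ∈ V_d and i ∈ f_A(δ'(i)), and all orderings (duplicate-free lists) σ_i enumerating ψ^{-1}(i) for each agent i, of max_i [the chained distance from o_i through σ_i to δ'(i)]. -/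

import Mathlib

/-- The chained distance `dist(u, t₁) + Σ_{j} dist(t_j, t_{j+1}) + dist(t_k, v)`
through a list of intermediate vertices, equal to `dist(u, v)` when the list is
empty.  This is the cost of the Hamiltonian path `u, t₁, …, t_k, v` in the
metric closure (target graph) of `G`. -/
noncomputable def chainedDist {V : Type*} (G : SimpleGraph V) : V → List V → V → ℕ
  | u, [], v => G.dist u v
  | u, t :: ts, v => G.dist u t + chainedDist G t ts v

/-- Prepending an edge to the start vertex increases the chained distance by at most one. -/
theorem chainedDist_le_succ_of_adj {V : Type*} {G : SimpleGraph V} (hconn : G.Connected)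
    {u u' : V} (h : G.Adj u u') (l : List V) (v : V) :
    chainedDist G u l v ≤ chainedDist G u' l v + 1 := by
  have key (x : V) : G.dist u x ≤ G.dist u' x + 1 := by
    have := hconn.dist_triangle (u := u) (v := u') (w := x)
    rw [SimpleGraph.dist_eq_one_iff_adj.mpr h] at this
    omega
  cases l with
  | nil => exact key v
  | cons x l =>
    have := key x
    simp only [chainedDist]
    omega

/-- The chained distance through vertices met in order along a walk is at most its length. -/
theorem chainedDist_le_length_of_sublist {V : Type*} {G : SimpleGraph V} (hconn : G.Connected)
    {u v : V} (p : G.Walk u v) {l : List V} (hl : l.Sublist p.support) :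
    chainedDist G u l v ≤ p.length := by
  induction p generalizing l with
  | nil =>
    rcases List.sublist_singleton.mp hl with rfl | rfl <;> simp [chainedDist]
  | @cons u u' v h p ih =>
    rw [SimpleGraph.Walk.support_cons, List.sublist_cons_iff] at hl
    rw [SimpleGraph.Walk.length_cons]
    rcases hl with hl | ⟨r, rfl, hr⟩
    · exact (chainedDist_le_succ_of_adj hconn h l v).trans (Nat.succ_le_succ (ih hl))
    · simp only [chainedDist, SimpleGraph.dist_self, zero_add]
      exact (chainedDist_le_succ_of_adj hconn h r v).trans (Nat.succ_le_succ (ih hr))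

/-- Admissibility of the min-max MHPP heuristic: for any feasible set of
covering walks (one per agent, to distinct eligible goals, collectively
visiting every target via an eligible agent), the makespan
`max_i length(w_i)` is bounded below by the optimal min-max multi-agent
Hamiltonian path value over all eligible target assignments, injective
eligible goal assignments, and orderings of each agent's assigned targets. -/
theorem minmax_mhpp_admissible
    {V : Type*} [Fintype V] [DecidableEq V] (G : SimpleGraph V)
    (hconn : G.Connected) (N M : ℕ)
    (o : Fin N → V) (Vd : Set V) (t : Fin M → V) (fA : V → Set (Fin N))
    (δ : Fin N → V) (hδinj : Function.Injective δ)
    (hδ : ∀ i, δ i ∈ Vd ∧ i ∈ fA (δ i))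
    (w : ∀ i : Fin N, G.Walk (o i) (δ i))
    (hcover : ∀ m : Fin M, ∃ i : Fin N, i ∈ fA (t m) ∧ t m ∈ (w i).support) :
    sInf {n : ℕ | ∃ (ψ : Fin M → Fin N) (δ' : Fin N → V) (σ : Fin N → List V),
        (∀ m, ψ m ∈ fA (t m)) ∧
        Function.Injective δ' ∧ (∀ i, δ' i ∈ Vd ∧ i ∈ fA (δ' i)) ∧
        (∀ i, (σ i).Nodup ∧ (∀ x, x ∈ σ i ↔ ∃ m, ψ m = i ∧ t m = x)) ∧
        n = Finset.univ.sup (fun i => chainedDist G (o i) (σ i) (δ' i))} ≤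
      Finset.univ.sup (fun i => (w i).length) := by
  classical
  choose ψ hψ hmem using hcover
  let σ : Fin N → List V := fun i =>
    ((w i).support.filter fun x => ∃ m, ψ m = i ∧ t m = x).dedup
  have hσ (i : Fin N) : (σ i).Sublist (w i).support :=
    (List.dedup_sublist _).trans List.filter_sublist
  refine le_trans (Nat.sInf_le ?_)
    (Finset.sup_mono_fun fun i _ => chainedDist_le_length_of_sublist hconn (w i) (hσ i))
  refine ⟨ψ, δ, σ, hψ, hδinj, hδ, fun i => ⟨List.nodup_dedup _, fun x => ?_⟩, rfl⟩
  simp only [σ, List.mem_dedup, List.mem_filter, decide_eq_true_eq, and_iff_right_iff_imp]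
  rintro ⟨m, rfl, rfl⟩
  exact hmem m
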